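/- Let n and m be natural numbers with 1 ≤ m ≤ 2^n, and let θ = Real.arccos (Real.sqrt (m / 2^n)). Then 1 − θ/π ≥ 1/2 + 2^{−(⌈n/2⌉ + 3)}, where ⌈n/2⌉ denotes the ceiling of n/2 (in Lean, (n+1)/2). Equivalently, (2π − 2θ)/(2π) ≥ 1/2 + 1/2^{⌈n/2⌉+3}. -/

import Mathlib

/-!
Since `arccos x = π / 2 - arcsin x`, the phase exceeds `1 / 2` by exactly `arcsin (√p) / π`, where
`p ≥ 2⁻ⁿ` is the misclassified fraction. As `x ≤ arcsin x` and `π ≤ 4`, the excess is at least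
`√p / 4 ≥ 2 ^ (-(⌈n / 2⌉ + 2))`, which leaves one bit to spare.
-/

open Real

theorem self_le_arcsin {x : ℝ} (hx₀ : 0 ≤ x) (hx₁ : x ≤ 1) : x ≤ arcsin x := by
  simpa only [sin_arcsin (neg_one_lt_zero.le.trans hx₀) hx₁] using sin_le (arcsin_nonneg.2 hx₀)

theorem one_sub_arccos_div_pi (x : ℝ) : 1 - arccos x / π = 1 / 2 + arcsin x / π := by
  rw [arccos]
  field_simp
  ring

theorem one_half_add_div_four_le_one_sub_arccos_div_pi {x : ℝ} (hx₀ : 0 ≤ x) (hx₁ : x ≤ 1) :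
    1 / 2 + x / 4 ≤ 1 - arccos x / π := by
  rw [one_sub_arccos_div_pi]
  gcongr
  · exact arcsin_nonneg.2 hx₀
  · exact self_le_arcsin hx₀ hx₁
  · exact pi_le_four

theorem pow_succ_div_two_le_sqrt_pow {r : ℝ} (hr₀ : 0 ≤ r) (hr₁ : r ≤ 1) (n : ℕ) :
    r ^ ((n + 1) / 2) ≤ √(r ^ n) := by
  apply le_sqrt_of_sq_le
  rw [← pow_mul]
  exact pow_le_pow_of_le_one hr₀ hr₁ (by lia)

theorem misclassification_phase_gap_general (n : ℕ) {p : ℝ} (hp : 1 / 2 ^ n ≤ p) (hp₁ : p ≤ 1) :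
    1 / 2 + 1 / 2 ^ ((n + 1) / 2 + 2) ≤ 1 - arccos √p / π :=
  calc
    (1 : ℝ) / 2 + 1 / 2 ^ ((n + 1) / 2 + 2) = 1 / 2 + (1 / 2) ^ ((n + 1) / 2) / 4 := by
      rw [one_div_pow, pow_add, div_div]
      norm_num
    _ ≤ 1 / 2 + √p / 4 := by
      gcongr
      rw [← one_div_pow] at hp
      exact (pow_succ_div_two_le_sqrt_pow (by norm_num) (by norm_num) n).trans (sqrt_le_sqrt hp)
    _ ≤ 1 - arccos √p / π :=
      one_half_add_div_four_le_one_sub_arccos_div_pi (sqrt_nonneg p) (sqrt_le_one.2 hp₁)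

/-- If a hyperplane misclassifies m ≥ 1 of the 2^n data points, then the
phase (2π − 2θ)/(2π) = 1 − θ/π exceeds 1/2 by at least 2^{−(⌈n/2⌉+3)}. -/
theorem misclassification_phase_gap
    (n m : ℕ) (hm : 1 ≤ m) (hm' : m ≤ 2 ^ n)
    (θ : ℝ) (hθ : θ = Real.arccos (Real.sqrt ((m : ℝ) / 2 ^ n))) :
    1 - θ / Real.pi ≥ 1 / 2 + 1 / 2 ^ ((n + 1) / 2 + 3) := by
  have hp : 1 / 2 ^ n ≤ (m : ℝ) / 2 ^ n := by gcongr; exact_mod_cast hm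
  have hp₁ : (m : ℝ) / 2 ^ n ≤ 1 := div_le_one_of_le₀ (by exact_mod_cast hm') (by positivity)
  refine hθ ▸ (misclassification_phase_gap_general n hp hp₁).trans' ?_
  gcongr <;> norm_num
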